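/- Let K, L, M be pretriangulated categories and F : K → L, G : L → M exact functors. Then: (a) if F is an equivalence of categories, F is confluent; (b) if F and G are both confluent, then the composite G ∘ F is confluent. -/

import Mathlib

/-!
Both parts rest on two facts. The preimage of a thick subcategory under an exact functor is thick
(`IsThick.preimage`), and consequently the image under an exact functor of a class of objects and
that of its thick closure generate the same thick subcategory (`thickClosure_image_thickClosure`).

For (b), the latter fact gives `thick (GF(M)) = thick (G(thick (F(M))))`. Since `thick (F(M))` and
`thick (F(N))` are thick, confluence of `G` and then of `F` computes the intersection.

For (a), the quasi-inverse `F⁻¹` of an exact equivalence is again exact, so the preimage of a thick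
`M` under `F⁻¹` is thick; it is exactly `thick (F(M))` (`thickClosure_image_of_isEquivalence`).
An object `Y` with `F⁻¹ Y` in `M ∩ N` is isomorphic to `F (F⁻¹ Y)`, hence lies in `thick (F(M ∩ N))`.
The reverse inclusion is monotonicity of the closure, and essential surjectivity gives generation.
-/

open CategoryTheory Limits Pretriangulated

universe w v u

variable {C : Type u} [Category.{v} C] [HasZeroObject C] [HasShift C ℤ] [Preadditive C]
  [∀ n : ℤ, (shiftFunctor C n).Additive] [Pretriangulated C]

/-- A thick subcategory of a pretriangulated category, viewed as a class of objects:
it contains the zero objects and is closed under isomorphisms, all shifts, cones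
(for every distinguished triangle `X → Y → Z → X⟦1⟧`, if `X` and `Y` lie in the
subcategory then so does `Z`), and direct summands (retracts). -/
structure IsThick (S : Set C) : Prop where
  zero : ∀ X : C, IsZero X → X ∈ S
  mem_of_iso : ∀ {X Y : C}, (X ≅ Y) → X ∈ S → Y ∈ S
  shift : ∀ (X : C) (n : ℤ), X ∈ S → (X⟦n⟧ : C) ∈ S
  cone : ∀ T, (T ∈ distTriang C) → T.obj₁ ∈ S → T.obj₂ ∈ S → T.obj₃ ∈ S
  retract : ∀ (X Y : C) (s : Y ⟶ X) (r : X ⟶ Y), s ≫ r = 𝟙 Y → X ∈ S → Y ∈ S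

/-- `thickClosure A` is the smallest thick subcategory containing `A`, i.e. the
intersection of all thick subcategories containing `A`. -/
def thickClosure (A : Set C) : Set C := ⋂₀ {S : Set C | IsThick S ∧ A ⊆ S}

universe v' u' v'' u''

section

variable {D : Type u'} [Category.{v'} D] [HasZeroObject D] [HasShift D ℤ] [Preadditive D]
  [∀ n : ℤ, (shiftFunctor D n).Additive] [Pretriangulated D]

/-- An exact functor `F : K ⥤ L` is confluent if `thick_L(F(K)) = L` (the image of `F`
generates `L`) and for every pair of thick subcategories `M`, `N` of `K` one has
`thick_L(F(M)) ∩ thick_L(F(N)) = thick_L(F(M ∩ N))`. -/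
def IsConfluent (F : C ⥤ D) : Prop :=
  thickClosure (Set.range F.obj) = Set.univ ∧
  ∀ M N : Set C, IsThick M → IsThick N →
    thickClosure (F.obj '' M) ∩ thickClosure (F.obj '' N) = thickClosure (F.obj '' (M ∩ N))

lemma subset_thickClosure (A : Set C) : A ⊆ thickClosure A :=
  fun _ hX _ h => h.2 hX

lemma thickClosure_subset {A S : Set C} (hS : IsThick S) (h : A ⊆ S) : thickClosure A ⊆ S :=
  fun _ hX => hX _ ⟨hS, h⟩

lemma isThick_thickClosure (A : Set C) : IsThick (thickClosure A) where
  zero X hX S hS := hS.1.zero X hX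
  mem_of_iso e hX S hS := hS.1.mem_of_iso e (hX S hS)
  shift X n hX S hS := hS.1.shift X n (hX S hS)
  cone T hT h₁ h₂ S hS := hS.1.cone T hT (h₁ S hS) (h₂ S hS)
  retract X Y s r h hX S hS := hS.1.retract X Y s r h (hX S hS)

lemma thickClosure_mono {A B : Set C} (h : A ⊆ B) : thickClosure A ⊆ thickClosure B :=
  thickClosure_subset (isThick_thickClosure B) (h.trans (subset_thickClosure B))

lemma IsThick.preimage (F : C ⥤ D) [F.CommShift ℤ] [F.IsTriangulated] {S : Set D}
    (hS : IsThick S) : IsThick (F.obj ⁻¹' S) where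
  zero X hX := hS.zero _ (F.map_isZero hX)
  mem_of_iso e hX := hS.mem_of_iso (F.mapIso e) hX
  shift X n hX := hS.mem_of_iso ((F.commShiftIso n).app X).symm (hS.shift _ n hX)
  cone T hT h₁ h₂ := hS.cone _ (F.map_distinguished T hT) h₁ h₂
  retract X Y s r h hX :=
    hS.retract _ _ (F.map s) (F.map r) (by rw [← F.map_comp, h, F.map_id]) hX

/-- The objects sent by `F` into `thick (F(A))` form a thick subcategory containing `A`, hence
containing `thick A`. -/
lemma thickClosure_image_thickClosure (F : C ⥤ D) [F.CommShift ℤ] [F.IsTriangulated]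
    (A : Set C) : thickClosure (F.obj '' thickClosure A) = thickClosure (F.obj '' A) := by
  apply subset_antisymm
  · refine thickClosure_subset (isThick_thickClosure _) (Set.image_subset_iff.2 ?_)
    exact thickClosure_subset ((isThick_thickClosure _).preimage F)
      (Set.image_subset_iff.1 (subset_thickClosure _))
  · exact thickClosure_mono (Set.image_mono (subset_thickClosure A))

/-- For an exact equivalence, `thick (F(M))` is the preimage of `M` under the quasi-inverse: that
preimage is thick because the quasi-inverse, being right adjoint to an exact functor, is exact. -/
lemma thickClosure_image_of_isEquivalence (F : C ⥤ D) [F.CommShift ℤ] [F.IsTriangulated]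
    [F.IsEquivalence] {M : Set C} (hM : IsThick M) :
    thickClosure (F.obj '' M) = F.inv.obj ⁻¹' M := by
  let adj : F ⊣ F.inv := F.asEquivalence.toAdjunction
  let : F.inv.CommShift ℤ := adj.rightAdjointCommShift ℤ
  have := adj.commShift_of_leftAdjoint ℤ
  have : F.inv.IsTriangulated := adj.isTriangulated_rightAdjoint
  apply subset_antisymm
  · refine thickClosure_subset (hM.preimage F.inv) ?_
    rintro _ ⟨X, hX, rfl⟩
    exact hM.mem_of_iso (F.asEquivalence.unitIso.app X) hX
  · intro Y hY
    exact (isThick_thickClosure _).mem_of_iso (F.asEquivalence.counitIso.app Y)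
      (subset_thickClosure _ ⟨_, hY, rfl⟩)

/-- (a) An exact equivalence is confluent; (b) the composite of two confluent exact
functors is confluent. -/
theorem isConfluent_of_isEquivalence_and_isConfluent_comp
    {E : Type u''} [Category.{v''} E] [HasZeroObject E] [HasShift E ℤ] [Preadditive E]
    [∀ n : ℤ, (shiftFunctor E n).Additive] [Pretriangulated E]
    (F : C ⥤ D) [F.CommShift ℤ] [F.IsTriangulated]
    (G : D ⥤ E) [G.CommShift ℤ] [G.IsTriangulated] :
    (F.IsEquivalence → IsConfluent F) ∧
    (IsConfluent F → IsConfluent G → IsConfluent (F ⋙ G)) := by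
  have image_comp (A : Set C) : (F ⋙ G).obj '' A = G.obj '' (F.obj '' A) :=
    (Set.image_image G.obj F.obj A).symm
  refine ⟨fun _ => ⟨?_, fun M N hM hN => ?_⟩, fun hF hG => ⟨?_, fun M N hM hN => ?_⟩⟩
  · refine Set.eq_univ_of_forall fun Y => ?_
    exact (isThick_thickClosure _).mem_of_iso (F.objObjPreimageIso Y)
      (subset_thickClosure _ ⟨_, rfl⟩)
  · apply subset_antisymm
    · rw [thickClosure_image_of_isEquivalence F hM, thickClosure_image_of_isEquivalence F hN]
      intro Y hY
      exact (isThick_thickClosure _).mem_of_iso (F.asEquivalence.counitIso.app Y)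
        (subset_thickClosure _ ⟨_, hY, rfl⟩)
    · exact Set.subset_inter (thickClosure_mono (Set.image_mono Set.inter_subset_left))
        (thickClosure_mono (Set.image_mono Set.inter_subset_right))
  · rw [← Set.image_univ, image_comp, ← thickClosure_image_thickClosure G, Set.image_univ, hF.1,
      Set.image_univ, hG.1]
  · rw [image_comp, image_comp, image_comp, ← thickClosure_image_thickClosure G (F.obj '' M),
      ← thickClosure_image_thickClosure G (F.obj '' N),
      hG.2 _ _ (isThick_thickClosure _) (isThick_thickClosure _), hF.2 M N hM hN,
      thickClosure_image_thickClosure]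

end
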